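/- arXiv:math/0501197 — 4 statements merged into one kernel-verified Lean document; each statement's English description precedes it below -/
import Mathlib

section
/- Let H ∈ (0, 1/2) and let 0 ≤ s' ≤ u' < v' ≤ t' ≤ s ≤ u < v ≤ t be real numbers. Then 0 ≤ −ρ_H(u',v';u,v) ≤ −ρ_H(s',t';s,t). In other words, the covariance of fractional Brownian increments over two disjoint ordered intervals is nonpositive, and its absolute value decreases when each interval is replaced by a subinterval. -/
/-!
The function `r ↦ r ^ (2 * H)` is concave on `[0, ∞)` because `2 * H ≤ 1`. For `a ≤ b ≤ c ≤ d` the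
lengths `c - a` and `d - b` lie between `c - b` and `d - a` and have the same sum, so concavity
gives `fbmCov H a b c d ≤ 0` (`fbmCov_nonpos`). The covariance is additive in each interval
(`fbmCov_add_left`, `fbmCov_add_right`), so enlarging an interval only adds nonpositive terms.
-/

open Set

/-- Covariance of fractional Brownian increments with Hurst parameter `H`:
`ρ_H(a,b;c,d) = (1/2)(|d−a|^{2H} + |c−b|^{2H} − |c−a|^{2H} − |d−b|^{2H})`,
i.e. `E((W_b − W_a)(W_d − W_c))`. -/
noncomputable def fbmCov (H a b c d : ℝ) : ℝ :=
  (|d - a| ^ (2 * H) + |c - b| ^ (2 * H) - |c - a| ^ (2 * H) - |d - b| ^ (2 * H)) / 2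

/-- Of two pairs of points with equal sums, the inner pair `y, z` has the larger sum of values
under a concave function. -/
lemma ConcaveOn.add_le_add_of_add_eq {S : Set ℝ} {f : ℝ → ℝ} (hf : ConcaveOn ℝ S f) {x y z w : ℝ}
    (hx : x ∈ S) (hw : w ∈ S) (hxy : x ≤ y) (hxz : x ≤ z) (h : y + z = x + w) :
    f x + f w ≤ f y + f z := by
  rcases (show x ≤ w by linarith).eq_or_lt with rfl | hlt
  · obtain rfl : y = x := by linarith
    obtain rfl : z = y := by linarith
    exact le_rfl
  · have hpos : 0 < w - x := sub_pos.mpr hlt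
    -- `y` and `z` are convex combinations of `x` and `w` with the two weights swapped.
    have ha : 0 ≤ (z - x) / (w - x) := div_nonneg (by linarith) hpos.le
    have hb : 0 ≤ (y - x) / (w - x) := div_nonneg (by linarith) hpos.le
    have hab : (z - x) / (w - x) + (y - x) / (w - x) = 1 := by
      rw [← add_div, div_eq_one_iff_eq hpos.ne']
      linarith
    have ey : (z - x) / (w - x) * x + (y - x) / (w - x) * w = y := by
      field_simp
      linear_combination x * h
    have ez : (y - x) / (w - x) * x + (z - x) / (w - x) * w = z := by
      field_simp
      linear_combination x * h
    have k1 := hf.2 hx hw ha hb hab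
    have k2 := hf.2 hx hw hb ha (by rw [add_comm]; exact hab)
    simp only [smul_eq_mul] at k1 k2
    rw [ey] at k1
    rw [ez] at k2
    linear_combination k1 + k2 - (f x + f w) * hab

lemma fbmCov_add_left (H a b e c d : ℝ) :
    fbmCov H a b c d + fbmCov H b e c d = fbmCov H a e c d := by
  unfold fbmCov
  ring

lemma fbmCov_add_right (H a b c d e : ℝ) :
    fbmCov H a b c d + fbmCov H a b d e = fbmCov H a b c e := by
  unfold fbmCov
  ring

lemma fbmCov_nonpos {H a b c d : ℝ} (hH0 : 0 < H) (hH1 : H ≤ 1 / 2)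
    (hab : a ≤ b) (hbc : b ≤ c) (hcd : c ≤ d) : fbmCov H a b c d ≤ 0 := by
  have key := (Real.concaveOn_rpow (p := 2 * H) (by linarith) (by linarith)).add_le_add_of_add_eq
    (x := c - b) (y := c - a) (z := d - b) (w := d - a)
    (mem_Ici.mpr (by linarith)) (mem_Ici.mpr (by linarith)) (by linarith) (by linarith) (by ring)
  unfold fbmCov
  rw [abs_of_nonneg (show 0 ≤ d - a by linarith), abs_of_nonneg (show 0 ≤ c - b by linarith),
    abs_of_nonneg (show 0 ≤ c - a by linarith), abs_of_nonneg (show 0 ≤ d - b by linarith)]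
  linarith

/-- For `H ∈ (0,1/2)` and `0 ≤ s' ≤ u' < v' ≤ t' ≤ s ≤ u < v ≤ t`, the covariance of
fractional Brownian increments over two disjoint ordered intervals is nonpositive, and its
absolute value decreases when each interval is replaced by a subinterval:
`0 ≤ −ρ_H(u',v';u,v) ≤ −ρ_H(s',t';s,t)`. -/
theorem fbmCov_disjoint_nonpos_antitone (H : ℝ) (hH : H ∈ Ioo (0 : ℝ) (1 / 2))
    (s' u' v' t' s u v t : ℝ)
    (hs' : 0 ≤ s') (h1 : s' ≤ u') (h2 : u' < v') (h3 : v' ≤ t')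
    (h4 : t' ≤ s) (h5 : s ≤ u) (h6 : u < v) (h7 : v ≤ t) :
    0 ≤ -fbmCov H u' v' u v ∧ -fbmCov H u' v' u v ≤ -fbmCov H s' t' s t := by
  obtain ⟨hH0, hH1⟩ := hH
  refine ⟨neg_nonneg.mpr (fbmCov_nonpos hH0 hH1.le h2.le (by linarith) h6.le), ?_⟩
  have e1 := fbmCov_add_left H s' u' t' s t
  have e2 := fbmCov_add_left H u' v' t' s t
  have e3 := fbmCov_add_right H u' v' s u t
  have e4 := fbmCov_add_right H u' v' u v t
  have n1 := fbmCov_nonpos hH0 hH1.le h1 (c := s) (d := t) (by linarith) (by linarith)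
  have n2 := fbmCov_nonpos hH0 hH1.le h3 (c := s) (d := t) (by linarith) (by linarith)
  have n3 := fbmCov_nonpos hH0 hH1.le h2.le (c := s) (d := u) (by linarith) h5
  have n4 := fbmCov_nonpos hH0 hH1.le h2.le (c := v) (d := t) (by linarith) h7
  linarith
end

section
/- Let E be a normed vector space, θ ∈ (0,1], K ≥ 0, let D = (t_i)_{0 ≤ i ≤ N} be a subdivision of [0,1], and let F : [0,1] → E be affine on each interval [t_i, t_{i+1}]. If ‖F(t_j) − F(t_i)‖ ≤ K|t_j − t_i|^θ for all grid points t_i, t_j of D, then ‖F(t) − F(s)‖ ≤ 3K|t−s|^θ for all s, t ∈ [0,1]. -/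
/-!
On a single cell `[a, b]` of the subdivision, `F` has constant slope, so for `s ≤ t` in the cell
`‖F t - F s‖ = r ‖F b - F a‖ ≤ K r (b - a) ^ θ` with `r = (t - s) / (b - a) ∈ [0, 1]`; since
`r ≤ r ^ θ` for `θ ≤ 1`, this is at most `K (t - s) ^ θ` (`norm_sub_le_of_affine_cell`). If `s < t`
lie in different cells, there are grid points `s ≤ p ≤ q ≤ t` with `p` in the cell of `s` and `q` in
the cell of `t`; the increments over `[s, p]`, `[p, q]` and `[q, t]` are each bounded by
`K (t - s) ^ θ`, which gives the factor `3`.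
-/

open Set

/-- A function affine on `[a, b]` inherits on all of `[a, b]` the Hölder bound satisfied by its
increment between the endpoints, with the same constant. -/
lemma norm_sub_le_of_affine_cell {E : Type*} [NormedAddCommGroup E] [NormedSpace ℝ E]
    {θ K a b s t : ℝ} (hθ1 : θ ≤ 1) (hab : a < b) {F : ℝ → E}
    (haff : ∀ u ∈ Icc a b, F u = F a + ((u - a) / (b - a)) • (F b - F a))
    (hF : ‖F b - F a‖ ≤ K * |b - a| ^ θ)
    (has : a ≤ s) (hst : s ≤ t) (htb : t ≤ b) :
    ‖F t - F s‖ ≤ K * (t - s) ^ θ := by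
  have hba : 0 < b - a := sub_pos.2 hab
  have hr0 : 0 ≤ (t - s) / (b - a) := div_nonneg (by linarith) hba.le
  have hr1 : (t - s) / (b - a) ≤ 1 := (div_le_one hba).2 (by linarith)
  have hdiff : F t - F s = ((t - s) / (b - a)) • (F b - F a) := by
    rw [haff t ⟨has.trans hst, htb⟩, haff s ⟨has, hst.trans htb⟩, add_sub_add_left_eq_sub,
      ← sub_smul]
    congr 1
    ring
  rw [abs_of_pos hba] at hF
  calc ‖F t - F s‖ = (t - s) / (b - a) * ‖F b - F a‖ := by
        rw [hdiff, norm_smul, Real.norm_of_nonneg hr0]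
    _ ≤ ((t - s) / (b - a)) ^ θ * (K * (b - a) ^ θ) := by
        gcongr
        exact Real.self_le_rpow_of_le_one hr0 hr1 hθ1
    _ = K * (t - s) ^ θ := by
        rw [Real.div_rpow (by linarith) hba.le]
        have : (b - a) ^ θ ≠ 0 := (Real.rpow_pos_of_pos hba θ).ne'
        field_simp

lemma exists_cell_of_mem (tt : ℕ → ℝ) (u : ℝ) (h0 : tt 0 ≤ u) (n : ℕ) (hn : 0 < n)
    (hu : u ≤ tt n) : ∃ i < n, u ∈ Icc (tt i) (tt (i + 1)) := by
  induction n with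
  | zero => exact absurd hn (lt_irrefl _)
  | succ k ih =>
    by_cases hk : tt k ≤ u
    · exact ⟨k, k.lt_succ_self, hk, hu⟩
    · have hk0 : 0 < k := by
        rcases Nat.eq_zero_or_pos k with rfl | h
        · exact absurd h0 hk
        · exact h
      obtain ⟨i, hi, hiu⟩ := ih hk0 (not_le.1 hk).le
      exact ⟨i, hi.trans k.lt_succ_self, hiu⟩

/-- Let `F : [0,1] → E` be affine on each interval of a subdivision `D = (t_i)` of `[0,1]`.
If `‖F(t_j) − F(t_i)‖ ≤ K |t_j − t_i|^θ` for all grid points of `D`, then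
`‖F(t) − F(s)‖ ≤ 3K |t−s|^θ` for all `s, t ∈ [0,1]`. -/
theorem piecewise_affine_holder_of_grid_holder {E : Type*}
    [NormedAddCommGroup E] [NormedSpace ℝ E]
    (θ K : ℝ) (hθ : θ ∈ Ioc (0 : ℝ) 1) (hK : 0 ≤ K)
    (N : ℕ) (hN : 0 < N) (tt : ℕ → ℝ) (ht0 : tt 0 = 0) (htN : tt N = 1)
    (hmono : ∀ i < N, tt i < tt (i + 1))
    (F : ℝ → E)
    (haffine : ∀ i < N, ∀ u ∈ Icc (tt i) (tt (i + 1)),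
      F u = F (tt i) + ((u - tt i) / (tt (i + 1) - tt i)) • (F (tt (i + 1)) - F (tt i)))
    (hgrid : ∀ i ≤ N, ∀ j ≤ N, ‖F (tt j) - F (tt i)‖ ≤ K * |tt j - tt i| ^ θ) :
    ∀ s ∈ Icc (0 : ℝ) 1, ∀ t ∈ Icc (0 : ℝ) 1, ‖F t - F s‖ ≤ 3 * K * |t - s| ^ θ := by
  intro s hs t ht
  obtain ⟨hθ0, hθ1⟩ := hθ
  wlog hst : s ≤ t generalizing s t
  · rw [norm_sub_rev, abs_sub_comm]
    exact this t ht s hs (not_le.1 hst).le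
  have hle : ∀ i j, i ≤ j → j ≤ N → tt i ≤ tt j := by
    intro i j hij
    induction j, hij using Nat.le_induction with
    | base => exact fun _ => le_rfl
    | succ j _ ih => exact fun hj => (ih (by omega)).trans (hmono j hj).le
  have hcell : ∀ i < N, ∀ x y, tt i ≤ x → x ≤ y → y ≤ tt (i + 1) →
      ‖F y - F x‖ ≤ K * (y - x) ^ θ := fun i hi x y hx hxy hy =>
    norm_sub_le_of_affine_cell hθ1 (hmono i hi) (haffine i hi)
      (hgrid i hi.le (i + 1) hi) hx hxy hy
  obtain ⟨i, hi, his, his'⟩ := exists_cell_of_mem tt s (ht0 ▸ hs.1) N hN (htN ▸ hs.2)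
  obtain ⟨j, hj, hjt, hjt'⟩ := exists_cell_of_mem tt t (ht0 ▸ ht.1) N hN (htN ▸ ht.2)
  rw [abs_of_nonneg (sub_nonneg.2 hst)]
  have hpos : 0 ≤ K * (t - s) ^ θ := mul_nonneg hK (Real.rpow_nonneg (sub_nonneg.2 hst) θ)
  have hsub : ∀ x y, s ≤ x → x ≤ y → y ≤ t → K * (y - x) ^ θ ≤ K * (t - s) ^ θ :=
    fun x y hx hxy hy => mul_le_mul_of_nonneg_left
      (Real.rpow_le_rpow (by linarith) (by linarith) hθ0.le) hK
  rcases lt_trichotomy i j with hij | rfl | hij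
  · have hpq := hle (i + 1) j hij hj.le
    have h1 := (hcell i hi s _ his his' le_rfl).trans (hsub _ _ le_rfl his' (hpq.trans hjt))
    have h2 := hgrid (i + 1) hi j hj.le
    rw [abs_of_nonneg (sub_nonneg.2 hpq)] at h2
    replace h2 := h2.trans (hsub _ _ his' hpq hjt)
    have h3 := (hcell j hj _ t le_rfl hjt hjt').trans (hsub _ _ (his'.trans hpq) hjt le_rfl)
    have hsplit : F t - F s =
        (F t - F (tt j)) + (F (tt j) - F (tt (i + 1))) + (F (tt (i + 1)) - F s) := by abel
    rw [hsplit]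
    refine norm_add₃_le.trans ?_
    linarith
  · have := hcell i hi s t his hst hjt'
    linarith
  · -- Cells in reversed order force `t ≤ tt (j + 1) ≤ tt i ≤ s`, hence `s = t`.
    have heq : s = t := le_antisymm hst (hjt'.trans ((hle (j + 1) i hij hi.le).trans his))
    rw [heq] at hpos ⊢
    rw [sub_self, norm_zero]
    linarith
end

section
/- Let H ∈ (0, 1/2) and let (W_t)_{t ∈ [0,1]} be a fractional Brownian motion with Hurst parameter H on a probability space. Then for all 0 ≤ s' < t' ≤ s < t ≤ 1, all r ∈ [s,t] and all r' ∈ [s',t']: |E( W(s',t') · W(s,t) · W(s,r) · W(s',r') )| ≤ 3 (t−s)^{2H} (t'−s')^{2H}. -/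
/-! No Wick formula is needed: Hölder's inequality already yields the constant `3`. Each of
the four increments is a centered Gaussian with variance (length)^{2H}, hence has fourth moment `3 (length)^{4H}`
(`IsFBM.increment_moment_four`). With `A = (t'-s')^{2H}` and `B = (t-s)^{2H}`, the increments inside
`[s',t']` have fourth moment at most `3A²` and those inside `[s,t]` at most `3B²`, so that
`E|product| ≤ (3A² · 3A² · 3B² · 3B²)^{1/4} = 3AB`. Hölder's inequality is used in the
pointwise form of a weighted AM-GM inequality (`abs_mul_four_le`), whose integral gives the same
constant.
-/

open Set MeasureTheory ProbabilityTheory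

/-- A (one-dimensional) fractional Brownian motion with Hurst parameter `H` on `[0,1]`:
a measurable process such that every finite linear combination `Σ aᵢ W_{tᵢ}` is a centered
Gaussian random variable, with covariance
`E(W_s W_t) = (1/2)(s^{2H} + t^{2H} − |t−s|^{2H})`. -/
def IsFBM {Ω : Type*} [MeasurableSpace Ω] (P : Measure Ω) (H : ℝ) (W : ℝ → Ω → ℝ) : Prop :=
  (∀ t ∈ Icc (0 : ℝ) 1, Measurable (W t)) ∧
  (∀ (n : ℕ) (a : Fin n → ℝ) (ts : Fin n → ℝ), (∀ i, ts i ∈ Icc (0 : ℝ) 1) →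
    ∃ v : NNReal, Measure.map (fun ω => ∑ i, a i * W (ts i) ω) P = gaussianReal 0 v) ∧
  (∀ s ∈ Icc (0 : ℝ) 1, ∀ t ∈ Icc (0 : ℝ) 1,
    ∫ ω, W s ω * W t ω ∂P = (s ^ (2 * H) + t ^ (2 * H) - |t - s| ^ (2 * H)) / 2)

/-- Read off from the fourth derivative at `0` of the moment generating function
`x ↦ exp (v x² / 2)`. -/
lemma integral_pow_four_gaussianReal (v : NNReal) :
    ∫ x, x ^ 4 ∂(gaussianReal 0 v) = 3 * (v : ℝ) ^ 2 := by
  -- An exponential times a polynomial differentiates to one of the same form.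
  have step : ∀ p q : ℝ → ℝ, (∀ x, HasDerivAt p (q x - v * x * p x) x) →
      deriv (fun x : ℝ => p x * Real.exp (v * x ^ 2 / 2)) =
        fun x => q x * Real.exp (v * x ^ 2 / 2) := by
    intro p q h
    funext x
    have h1 : HasDerivAt (fun x : ℝ => (v : ℝ) * x ^ 2 / 2) (v * x) x := by
      have := ((hasDerivAt_pow 2 x).const_mul (v : ℝ)).div_const 2
      refine this.congr_deriv ?_
      push_cast
      ring
    have h2 := (h x).mul h1.exp
    refine (h2.congr_deriv ?_).deriv
    ring
  have hm : mgf (fun x => x) (gaussianReal 0 v) =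
      fun x : ℝ => 1 * Real.exp (v * x ^ 2 / 2) := by
    rw [mgf_fun_id_gaussianReal]
    simp
  have h4 : iteratedDeriv 4 (mgf (fun x => x) (gaussianReal 0 v)) 0 =
      ∫ x, x ^ 4 ∂(gaussianReal 0 v) := by
    rw [iteratedDeriv_mgf_zero] <;> simp
  rw [← h4, hm]
  simp only [iteratedDeriv_succ, iteratedDeriv_zero]
  rw [step (fun _ => 1) (fun x => v * x), step (fun x => v * x) (fun x => v + v ^ 2 * x ^ 2),
    step (fun x => v + v ^ 2 * x ^ 2) (fun x => 3 * v ^ 2 * x + v ^ 3 * x ^ 3),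
    step (fun x => 3 * v ^ 2 * x + v ^ 3 * x ^ 3)
      (fun x => 3 * v ^ 2 + 6 * v ^ 3 * x ^ 2 + v ^ 4 * x ^ 4)]
  · simp
  · intro x
    have := ((hasDerivAt_id x).const_mul (3 * (v : ℝ) ^ 2)).add
      ((hasDerivAt_pow 3 x).const_mul ((v : ℝ) ^ 3))
    refine this.congr_deriv ?_
    norm_num
    ring
  · intro x
    have := ((hasDerivAt_pow 2 x).const_mul ((v : ℝ) ^ 2)).const_add (v : ℝ)
    refine this.congr_deriv ?_
    norm_num
    ring
  · intro x
    refine ((hasDerivAt_id x).const_mul (v : ℝ)).congr_deriv ?_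
    ring
  · intro x
    refine (hasDerivAt_const x (1 : ℝ)).congr_deriv ?_
    ring

lemma memLp_of_map_eq_gaussianReal {Ω : Type*} [MeasurableSpace Ω] {P : Measure Ω} {X : Ω → ℝ}
    (hX : Measurable X) {v : NNReal} (h : Measure.map X P = gaussianReal 0 v) (p : NNReal) :
    MemLp X p P := by
  have := memLp_id_gaussianReal (μ := 0) (v := v) p
  rw [← h] at this
  exact this.comp_of_map hX.aemeasurable

lemma IsFBM.increment_moment_four {Ω : Type*} [MeasurableSpace Ω] {P : Measure Ω}
    {H : ℝ} (hH : 0 < H) {W : ℝ → Ω → ℝ} (hW : IsFBM P H W) {a b : ℝ}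
    (ha : 0 ≤ a) (hab : a ≤ b) (hb : b ≤ 1) :
    Integrable (fun ω => (W b ω - W a ω) ^ 4) P ∧
      ∫ ω, (W b ω - W a ω) ^ 4 ∂P = 3 * ((b - a) ^ (2 * H)) ^ 2 := by
  obtain ⟨hmeas, hgauss, hcov⟩ := hW
  have haI : a ∈ Icc (0 : ℝ) 1 := ⟨ha, hab.trans hb⟩
  have hbI : b ∈ Icc (0 : ℝ) 1 := ⟨ha.trans hab, hb⟩
  have hL2 : ∀ c ∈ Icc (0 : ℝ) 1, MemLp (W c) 2 P := by
    intro c hc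
    obtain ⟨w, hw⟩ := hgauss 1 (fun _ => 1) (fun _ => c) (fun _ => hc)
    simp only [Finset.univ_unique, Finset.sum_singleton, one_mul] at hw
    exact memLp_of_map_eq_gaussianReal (hmeas c hc) hw 2
  have hXm : Measurable (fun ω => W b ω - W a ω) := (hmeas b hbI).sub (hmeas a haI)
  obtain ⟨v, hv⟩ := hgauss 2 ![1, -1] ![b, a] (by
    intro i
    fin_cases i
    · exact hbI
    · exact haI)
  have hv : Measure.map (fun ω => W b ω - W a ω) P = gaussianReal 0 v := by
    rw [← hv]
    congr 1
    funext ω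
    simp [Fin.sum_univ_two, sub_eq_add_neg]
  -- The second moment computed in two ways: from the law, and from the covariance.
  have hvar : (v : ℝ) = (b - a) ^ (2 * H) := by
    have e1 : ∫ ω, (W b ω - W a ω) ^ 2 ∂P = v := by
      have h := integral_map (μ := P) hXm.aemeasurable
        (f := fun x : ℝ => x ^ 2) (by fun_prop)
      rw [← h, hv]
      have h2 := variance_fun_id_gaussianReal (μ := 0) (v := v)
      rw [variance_eq_integral (by fun_prop)] at h2
      simpa using h2
    have ibb := (hL2 b hbI).integrable_mul (hL2 b hbI)
    have iba := (hL2 b hbI).integrable_mul (hL2 a haI)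
    have iaa := (hL2 a haI).integrable_mul (hL2 a haI)
    simp only [Pi.mul_def] at ibb iba iaa
    have e2 : ∫ ω, (W b ω - W a ω) ^ 2 ∂P =
        ∫ ω, W b ω * W b ω ∂P - 2 * ∫ ω, W b ω * W a ω ∂P + ∫ ω, W a ω * W a ω ∂P := by
      have isub : Integrable (fun ω => W b ω * W b ω - 2 * (W b ω * W a ω)) P :=
        ibb.sub (iba.const_mul 2)
      rw [← integral_const_mul, ← integral_sub ibb (iba.const_mul 2), ← integral_add isub iaa]
      congr 1
      funext ω
      ring
    rw [hcov b hbI b hbI, hcov b hbI a haI, hcov a haI a haI, e1, abs_sub_comm a b,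
      abs_of_nonneg (sub_nonneg.2 hab)] at e2
    rw [e2, sub_self, sub_self, abs_zero, Real.zero_rpow (by positivity)]
    ring
  have hL4 : MemLp (fun ω => W b ω - W a ω) 4 P := memLp_of_map_eq_gaussianReal hXm hv 4
  refine ⟨?_, ?_⟩
  · have := hL4.integrable_norm_pow (p := 4) (by norm_num)
    simpa [Even.pow_abs (by decide : Even 4)] using this
  · have h := integral_map (μ := P) hXm.aemeasurable
      (f := fun x : ℝ => x ^ 4) (by fun_prop)
    rw [← h, hv, integral_pow_four_gaussianReal, hvar]

/-- A weighted AM-GM inequality; the weights balance the two sides when `a, d` have size `√A` and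
`b, c` have size `√B`. -/
lemma abs_mul_four_le {A B : ℝ} (hA : 0 < A) (hB : 0 < B) (a b c d : ℝ) :
    |a * b * c * d| ≤ B / A / 4 * (a ^ 4 + d ^ 4) + A / B / 4 * (b ^ 4 + c ^ 4) := by
  have key : |a * b * c * d| ≤ B / A / 2 * (a * d) ^ 2 + A / B / 2 * (b * c) ^ 2 := by
    have e : B / A / 2 * (a * d) ^ 2 + A / B / 2 * (b * c) ^ 2
        = ((B * (a * d)) ^ 2 + (A * (b * c)) ^ 2) / (2 * (A * B)) := by
      field_simp
    rw [e, le_div_iff₀ (by positivity)]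
    have h1 := two_mul_le_add_sq (|B * (a * d)|) (|A * (b * c)|)
    rw [sq_abs, sq_abs, abs_mul, abs_mul A, abs_of_pos hA, abs_of_pos hB] at h1
    have h2 : |a * b * c * d| = |a * d| * |b * c| := by
      rw [← abs_mul]
      congr 1
      ring
    rw [h2]
    linarith
  have h1 : (a * d) ^ 2 ≤ (a ^ 4 + d ^ 4) / 2 := by nlinarith [sq_nonneg (a ^ 2 - d ^ 2)]
  have h2 : (b * c) ^ 2 ≤ (b ^ 4 + c ^ 4) / 2 := by nlinarith [sq_nonneg (b ^ 2 - c ^ 2)]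
  have h3 := mul_le_mul_of_nonneg_left h1 (by positivity : 0 ≤ B / A / 2)
  have h4 := mul_le_mul_of_nonneg_left h2 (by positivity : 0 ≤ A / B / 2)
  linarith

/-- For fractional Brownian motion with Hurst parameter `H ∈ (0,1/2)` and
`0 ≤ s' < t' ≤ s < t ≤ 1`, `r ∈ [s,t]`, `r' ∈ [s',t']`:
`|E(W(s',t') W(s,t) W(s,r) W(s',r'))| ≤ 3 (t−s)^{2H} (t'−s')^{2H}`. -/
theorem fbm_fourth_moment_bound {Ω : Type*} [MeasurableSpace Ω]
    (P : Measure Ω) [IsProbabilityMeasure P]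
    (H : ℝ) (hH : H ∈ Ioo (0 : ℝ) (1 / 2)) (W : ℝ → Ω → ℝ) (hW : IsFBM P H W)
    (s' t' s t r r' : ℝ)
    (h0 : 0 ≤ s') (h1 : s' < t') (h2 : t' ≤ s) (h3 : s < t) (h4 : t ≤ 1)
    (hr : r ∈ Icc s t) (hr' : r' ∈ Icc s' t') :
    |∫ ω, (W t' ω - W s' ω) * (W t ω - W s ω) * (W r ω - W s ω) * (W r' ω - W s' ω) ∂P| ≤
      3 * (t - s) ^ (2 * H) * (t' - s') ^ (2 * H) := by
  have hH0 : 0 < H := hH.1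
  have hA : 0 < (t' - s') ^ (2 * H) := Real.rpow_pos_of_pos (by linarith) _
  have hB : 0 < (t - s) ^ (2 * H) := Real.rpow_pos_of_pos (by linarith) _
  obtain ⟨ia, ea⟩ := hW.increment_moment_four hH0 h0 h1.le (by linarith : t' ≤ 1)
  obtain ⟨ib, eb⟩ := hW.increment_moment_four hH0 (by linarith : 0 ≤ s) h3.le h4
  obtain ⟨ic, ec⟩ := hW.increment_moment_four hH0 (by linarith : 0 ≤ s) hr.1 (hr.2.trans h4)
  obtain ⟨id, ed⟩ := hW.increment_moment_four hH0 h0 hr'.1 (by linarith [hr'.2] : r' ≤ 1)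
  have hcB : ((r - s) ^ (2 * H)) ^ 2 ≤ ((t - s) ^ (2 * H)) ^ 2 := by
    have h5 : 0 ≤ r - s := sub_nonneg.2 hr.1
    have h6 : r - s ≤ t - s := by linarith [hr.2]
    gcongr
  have hdA : ((r' - s') ^ (2 * H)) ^ 2 ≤ ((t' - s') ^ (2 * H)) ^ 2 := by
    have h5 : 0 ≤ r' - s' := sub_nonneg.2 hr'.1
    have h6 : r' - s' ≤ t' - s' := by linarith [hr'.2]
    gcongr
  set A := (t' - s') ^ (2 * H)
  set B := (t - s) ^ (2 * H)
  have iad := (ia.add id).const_mul (B / A / 4)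
  have ibc := (ib.add ic).const_mul (A / B / 4)
  rw [← Real.norm_eq_abs]
  have hpt : ∀ ω, ‖(W t' ω - W s' ω) * (W t ω - W s ω) * (W r ω - W s ω) * (W r' ω - W s' ω)‖ ≤
      B / A / 4 * ((W t' ω - W s' ω) ^ 4 + (W r' ω - W s' ω) ^ 4) +
        A / B / 4 * ((W t ω - W s ω) ^ 4 + (W r ω - W s ω) ^ 4) :=
    fun ω => abs_mul_four_le hA hB _ _ _ _
  refine (norm_integral_le_of_norm_le (iad.add ibc) (Filter.Eventually.of_forall hpt)).trans ?_
  simp only [Pi.add_apply] at iad ibc ⊢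
  rw [integral_add iad ibc, integral_const_mul, integral_const_mul, integral_add ia id,
    integral_add ib ic, ea, eb, ec, ed]
  calc _ ≤ B / A / 4 * (3 * A ^ 2 + 3 * A ^ 2) + A / B / 4 * (3 * B ^ 2 + 3 * B ^ 2) := by
        gcongr
    _ = 3 * B * A := by
        field_simp
        ring
end

section
/- Let H ∈ (1/4, 1/2), p' ∈ (1/H, 4), and let (W¹_t)_{t∈[0,1]} and (W²_t)_{t∈[0,1]} be two independent fractional Brownian motions with Hurst parameter H, each with continuous sample paths, on a common probability space. For 0 ≤ s < t ≤ 1 define Y_{s,t} = ( (t−s)^{−2} ∫_s^t [ (u−s)(W¹_t − W¹_u) − (t−u)(W¹_u − W¹_s) ] du ) · (W²_t − W²_s). Then there exists a constant C, depending only on H and p', such that for every subdivision t_m < t_{m+1} < ... < t_n of [0,1] with mesh |D|: E( | Σ_{l=m}^{n−1} Y_{t_l, t_{l+1}} |² ) ≤ C |D|^{4H − 4/p'} (t_n − t_m)^{4/p'}. -/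
/-!
Writing `h_k = t_{k+1} - t_k`, `Y_k = A_k B_k` with `A_k` linear in `W¹` and `B_k` the increment
of `W²`, independence gives `E(Y_k Y_l) = E(A_k A_l) E(B_k B_l)`. Two facts about the covariance
`incCov` of fractional increments suffice.

* `abs_incCov_le`: for `H ≤ 1/2`, the covariance of an increment over an interval of length `h`
  with *any* other increment is at most `h^{2H}` in absolute value, because `x ↦ |x|^{2H}` is
  `2H`-Hölder with constant one. As `A_k` is an average of increments inside `[t_k, t_{k+1}]`,
  Fubini turns this into `|E(A_k A_l)| ≤ 4 h_k^{2H}` (`pathInt_cov`), with no decay needed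
  in the distance between the two intervals.
* `incCov_nonpos`: by concavity of `x ↦ x^{2H}`, disjoint increments are negatively correlated, so
  `∑_l |E(B_k B_l)|` telescopes and is at most `3 h_k^{2H}` (`sum_abs_incCov_le`).

Hence `E|∑ Y_k|² ≤ 12 ∑ h_k^{4H}`, and `1 ≤ 4/p' ≤ 4H` gives the bound of this sum by
`|D|^{4H - 4/p'} (t_n - t_m)^{4/p'}` (`sum_rpow_step_le`).
-/

open Set MeasureTheory ProbabilityTheory

/-- The random variable
`Y_{s,t} = ((t−s)^{−2} ∫_s^t [(u−s)(W¹_t − W¹_u) − (t−u)(W¹_u − W¹_s)] du)·(W²_t − W²_s)`. -/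
noncomputable def Yproc {Ω : Type*} (W1 W2 : ℝ → Ω → ℝ) (s t : ℝ) (ω : Ω) : ℝ :=
  ((t - s) ^ 2)⁻¹ *
    (∫ u in s..t, ((u - s) * (W1 t ω - W1 u ω) - (t - u) * (W1 u ω - W1 s ω))) *
    (W2 t ω - W2 s ω)

/-! ### Covariances of fractional increments -/

/-- The covariance `E((W_b − W_a)(W_d − W_c))` of two increments of a fractional Brownian motion,
as a function of the four times. -/
noncomputable def incCov (H a b c d : ℝ) : ℝ :=
  (|d - a| ^ (2 * H) + |c - b| ^ (2 * H) - |d - b| ^ (2 * H) - |c - a| ^ (2 * H)) / 2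

lemma abs_abs_rpow_sub_le {p : ℝ} (hp0 : 0 ≤ p) (hp1 : p ≤ 1) (x y : ℝ) :
    |(|x| ^ p - |y| ^ p)| ≤ |x - y| ^ p := by
  have key : ∀ x y : ℝ, |x| ^ p ≤ |x - y| ^ p + |y| ^ p := by
    intro x y
    calc |x| ^ p ≤ (|x - y| + |y|) ^ p := by
          apply Real.rpow_le_rpow (abs_nonneg _) _ hp0
          simpa using abs_add_le (x - y) y
      _ ≤ _ := Real.rpow_add_le_add_rpow (abs_nonneg _) (abs_nonneg _) hp0 hp1
  have h1 := key x y
  have h2 := key y x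
  rw [abs_sub_comm y x] at h2
  rw [abs_le]
  constructor <;> linarith

/-- The bound holds whatever the relative position of the two intervals, since `x ↦ |x|^{2H}` is
`2H`-Hölder with constant one. -/
lemma abs_incCov_le {H : ℝ} (h0 : 0 ≤ H) (h1 : H ≤ 1 / 2) (a b c d : ℝ) :
    |incCov H a b c d| ≤ |b - a| ^ (2 * H) := by
  have e1 := abs_abs_rpow_sub_le (p := 2 * H) (by linarith) (by linarith) (d - a) (d - b)
  have e2 := abs_abs_rpow_sub_le (p := 2 * H) (by linarith) (by linarith) (c - b) (c - a)
  have r1 : d - a - (d - b) = b - a := by ring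
  have r2 : c - b - (c - a) = -(b - a) := by ring
  rw [r1] at e1
  rw [r2, abs_neg] at e2
  rw [abs_le] at *
  unfold incCov
  constructor <;> linarith [e1.1, e1.2, e2.1, e2.2]

lemma incCov_comm (H a b c d : ℝ) : incCov H a b c d = incCov H c d a b := by
  unfold incCov
  rw [abs_sub_comm d a, abs_sub_comm c b, abs_sub_comm d b, abs_sub_comm c a]
  ring

lemma rpow_four_point {p : ℝ} (hp0 : 0 ≤ p) (hp1 : p ≤ 1) {x y δ : ℝ} (hx : 0 ≤ x)
    (hxy : x ≤ y) (hδ : 0 ≤ δ) : (y + δ) ^ p + x ^ p ≤ (x + δ) ^ p + y ^ p := by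
  rcases eq_or_lt_of_le hδ with rfl | hδ'
  · simp [add_comm]
  have hc := Real.concaveOn_rpow hp0 hp1
  have hD : 0 < y - x + δ := by linarith
  set l := δ / (y - x + δ) with hl
  have hl0 : 0 ≤ l := by positivity
  have hl1 : 0 ≤ 1 - l := by
    rw [hl, sub_nonneg, div_le_one hD]; linarith
  have hlD : l * (y - x + δ) = δ := by rw [hl]; field_simp
  have e1 := hc.2 (mem_Ici.mpr hx) (mem_Ici.mpr (by linarith : 0 ≤ y + δ)) hl1 hl0 (by ring)
  have e2 := hc.2 (mem_Ici.mpr hx) (mem_Ici.mpr (by linarith : 0 ≤ y + δ)) hl0 hl1 (by ring)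
  simp only [smul_eq_mul] at e1 e2
  have r1 : (1 - l) * x + l * (y + δ) = x + δ := by linear_combination hlD
  have r2 : l * x + (1 - l) * (y + δ) = y := by linear_combination -hlD
  rw [r1] at e1
  rw [r2] at e2
  nlinarith

/-- For `H ≤ 1/2`, increments over non-overlapping intervals are negatively correlated. -/
lemma incCov_nonpos {H : ℝ} (h0 : 0 ≤ H) (h1 : H ≤ 1 / 2) {a b c d : ℝ} (hab : a ≤ b)
    (hbc : b ≤ c) (hcd : c ≤ d) : incCov H a b c d ≤ 0 := by
  have := rpow_four_point (p := 2 * H) (by linarith) (by linarith) (x := c - b) (y := d - b)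
    (δ := b - a) (by linarith) (by linarith) (by linarith)
  have r1 : d - b + (b - a) = d - a := by ring
  have r2 : c - b + (b - a) = c - a := by ring
  rw [r1, r2] at this
  unfold incCov
  rw [abs_of_nonneg (by linarith : 0 ≤ d - a), abs_of_nonneg (by linarith : 0 ≤ c - b),
    abs_of_nonneg (by linarith : 0 ≤ d - b), abs_of_nonneg (by linarith : 0 ≤ c - a)]
  linarith

lemma le_of_step {m n : ℕ} {tt : ℕ → ℝ} (h : ∀ k, m ≤ k → k < n → tt k < tt (k + 1))
    {i j : ℕ} (hi : m ≤ i) (hij : i ≤ j) (hj : j ≤ n) : tt i ≤ tt j := by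
  induction j, hij using Nat.le_induction with
  | base => exact le_rfl
  | succ j hij ih => exact (ih (by omega)).trans (h j (by omega) (by omega)).le

/-- Off the diagonal the covariances are nonpositive, so the sum of their absolute values
telescopes, up to the diagonal term, to minus the covariance with the full increment. -/
lemma sum_abs_incCov_le {H : ℝ} (h0 : 0 ≤ H) (h1 : H ≤ 1 / 2) {m n : ℕ} {tt : ℕ → ℝ}
    (h : ∀ k, m ≤ k → k < n → tt k < tt (k + 1)) {k : ℕ} (hk : k ∈ Finset.Ico m n) :
    ∑ l ∈ Finset.Ico m n, |incCov H (tt k) (tt (k + 1)) (tt l) (tt (l + 1))|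
      ≤ 3 * (tt (k + 1) - tt k) ^ (2 * H) := by
  obtain ⟨hmk, hkn⟩ := Finset.mem_Ico.mp hk
  have hpos : 0 ≤ tt (k + 1) - tt k := by linarith [h k hmk hkn]
  have hterm : ∀ l ∈ Finset.Ico m n, |incCov H (tt k) (tt (k + 1)) (tt l) (tt (l + 1))| ≤
      -incCov H (tt k) (tt (k + 1)) (tt l) (tt (l + 1)) +
        if l = k then 2 * (tt (k + 1) - tt k) ^ (2 * H) else 0 := by
    intro l hl
    obtain ⟨hml, hln⟩ := Finset.mem_Ico.mp hl
    rcases lt_trichotomy l k with hlt | rfl | hgt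
    · have := incCov_nonpos h0 h1 (h l hml hln).le (le_of_step h (by omega : m ≤ l + 1) hlt hkn.le)
        (h k hmk hkn).le
      rw [incCov_comm] at this
      rw [if_neg hlt.ne, abs_of_nonpos this, add_zero]
    · have := abs_incCov_le h0 h1 (tt l) (tt (l + 1)) (tt l) (tt (l + 1))
      rw [abs_of_nonneg hpos] at this
      rw [if_pos rfl]
      linarith [le_abs_self (incCov H (tt l) (tt (l + 1)) (tt l) (tt (l + 1)))]
    · have := incCov_nonpos h0 h1 (h k hmk hkn).le (le_of_step h (by omega : m ≤ k + 1) hgt hln.le)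
        (h l hml hln).le
      rw [if_neg hgt.ne', abs_of_nonpos this, add_zero]
  refine (Finset.sum_le_sum hterm).trans ?_
  rw [Finset.sum_add_distrib, Finset.sum_ite_eq' , if_pos hk, Finset.sum_neg_distrib]
  have htel : ∑ l ∈ Finset.Ico m n, incCov H (tt k) (tt (k + 1)) (tt l) (tt (l + 1)) =
      incCov H (tt k) (tt (k + 1)) (tt m) (tt n) := by
    have := Finset.sum_Ico_sub
      (fun l => (|tt l - tt k| ^ (2 * H) - |tt l - tt (k + 1)| ^ (2 * H)) / 2) (hmk.trans hkn.le)
    unfold incCov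
    trans ((|tt n - tt k| ^ (2 * H) - |tt n - tt (k + 1)| ^ (2 * H)) / 2 -
      (|tt m - tt k| ^ (2 * H) - |tt m - tt (k + 1)| ^ (2 * H)) / 2)
    · rw [← this]
      exact Finset.sum_congr rfl fun l _ => by ring
    · ring
  have := abs_incCov_le h0 h1 (tt k) (tt (k + 1)) (tt m) (tt n)
  rw [abs_of_nonneg hpos] at this
  rw [htel]
  linarith [neg_abs_le (incCov H (tt k) (tt (k + 1)) (tt m) (tt n))]

lemma sum_rpow_step_le {H q : ℝ} (hq1 : 1 ≤ q) (hq : q ≤ 4 * H) {m n : ℕ} (hmn : m < n)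
    {tt : ℕ → ℝ} (h : ∀ k, m ≤ k → k < n → tt k < tt (k + 1)) :
    ∑ k ∈ Finset.Ico m n, (tt (k + 1) - tt k) ^ (4 * H) ≤
      ((Finset.Ico m n).sup' (Finset.nonempty_Ico.mpr hmn) fun k => tt (k + 1) - tt k)
        ^ (4 * H - q) * (tt n - tt m) ^ q := by
  set M := (Finset.Ico m n).sup' (Finset.nonempty_Ico.mpr hmn) fun k => tt (k + 1) - tt k with hM
  have hle : ∀ k ∈ Finset.Ico m n, tt (k + 1) - tt k ≤ M := fun k hk =>
    Finset.le_sup' (fun k => tt (k + 1) - tt k) hk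
  have hM0 : 0 < M := by
    have := hle m (Finset.mem_Ico.mpr ⟨le_rfl, hmn⟩)
    linarith [h m le_rfl hmn]
  have hMT : M ≤ tt n - tt m := by
    refine Finset.sup'_le _ _ fun k hk => ?_
    obtain ⟨hmk, hkn⟩ := Finset.mem_Ico.mp hk
    linarith [le_of_step h le_rfl hmk hkn.le, le_of_step h (by omega : m ≤ k + 1) hkn le_rfl]
  have hT0 : 0 < tt n - tt m := hM0.trans_le hMT
  calc ∑ k ∈ Finset.Ico m n, (tt (k + 1) - tt k) ^ (4 * H)
      ≤ ∑ k ∈ Finset.Ico m n, (tt (k + 1) - tt k) * M ^ (4 * H - 1) := by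
        refine Finset.sum_le_sum fun k hk => ?_
        obtain ⟨hmk, hkn⟩ := Finset.mem_Ico.mp hk
        have hp : 0 < tt (k + 1) - tt k := by linarith [h k hmk hkn]
        have e : (tt (k + 1) - tt k) ^ (4 * H) =
            (tt (k + 1) - tt k) * (tt (k + 1) - tt k) ^ (4 * H - 1) := by
          conv_rhs => rw [← Real.rpow_one_add' hp.le (by linarith)]
          congr 1; ring
        rw [e]
        gcongr
        · linarith
        · exact hle k hk
    _ = (tt n - tt m) * M ^ (4 * H - 1) := by
        rw [← Finset.sum_mul, Finset.sum_Ico_sub _ hmn.le]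
    _ = (tt n - tt m) * (M ^ (4 * H - q) * M ^ (q - 1)) := by
        rw [← Real.rpow_add hM0]; congr 2; ring
    _ ≤ (tt n - tt m) * (M ^ (4 * H - q) * (tt n - tt m) ^ (q - 1)) := by
        gcongr
    _ = M ^ (4 * H - q) * ((tt n - tt m) ^ (1 : ℝ) * (tt n - tt m) ^ (q - 1)) := by
        rw [Real.rpow_one]; ring
    _ = _ := by
        rw [← Real.rpow_add hT0]; congr 2; ring

/-! ### Second moments of increments and of path integrals -/

section Prob

variable {Ω : Type*} [MeasurableSpace Ω] {P : Measure Ω}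

lemma IsFBM.memLp {H : ℝ} {W : ℝ → Ω → ℝ} (hW : IsFBM P H W) {t : ℝ} (ht : t ∈ Icc (0 : ℝ) 1) :
    MemLp (W t) 2 P := by
  obtain ⟨v, hv⟩ := hW.2.1 1 (fun _ => 1) (fun _ => t) (fun _ => ht)
  have hv' : Measure.map (W t) P = gaussianReal 0 v := by simpa using hv
  have h := memLp_id_gaussianReal (μ := 0) (v := v) 2
  rw [← hv'] at h
  exact (memLp_map_measure_iff (by fun_prop) (hW.1 t ht).aemeasurable).mp h

lemma integral_sub_sub_sub {f₁ f₂ f₃ f₄ : Ω → ℝ} (h₁ : Integrable f₁ P) (h₂ : Integrable f₂ P)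
    (h₃ : Integrable f₃ P) (h₄ : Integrable f₄ P) :
    ∫ ω, (f₁ ω - f₂ ω - (f₃ ω - f₄ ω)) ∂P =
      ∫ ω, f₁ ω ∂P - ∫ ω, f₂ ω ∂P - (∫ ω, f₃ ω ∂P - ∫ ω, f₄ ω ∂P) := by
  rw [← integral_sub h₁ h₂, ← integral_sub h₃ h₄]
  exact integral_sub (h₁.sub h₂) (h₃.sub h₄)

lemma IsFBM.integral_inc {H : ℝ} {W : ℝ → Ω → ℝ} (hW : IsFBM P H W) {a b c d : ℝ}
    (ha : a ∈ Icc (0 : ℝ) 1) (hb : b ∈ Icc (0 : ℝ) 1) (hc : c ∈ Icc (0 : ℝ) 1)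
    (hd : d ∈ Icc (0 : ℝ) 1) :
    ∫ ω, (W b ω - W a ω) * (W d ω - W c ω) ∂P = incCov H a b c d := by
  have hi : ∀ s ∈ Icc (0 : ℝ) 1, ∀ t ∈ Icc (0 : ℝ) 1, Integrable (fun ω => W s ω * W t ω) P :=
    fun s hs t ht => (hW.memLp hs).integrable_mul (hW.memLp ht)
  have e : ∀ ω, (W b ω - W a ω) * (W d ω - W c ω) =
      (W b ω * W d ω - W b ω * W c ω) - (W a ω * W d ω - W a ω * W c ω) := fun ω => by ring
  simp_rw [e]
  rw [integral_sub_sub_sub (hi b hb d hd) (hi b hb c hc) (hi a ha d hd) (hi a ha c hc),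
    hW.2.2 b hb d hd, hW.2.2 b hb c hc, hW.2.2 a ha d hd, hW.2.2 a ha c hc]
  unfold incCov
  ring

lemma abs_integral_comb_le {X₁ X₂ Y₁ Y₂ : Ω → ℝ} (hX₁ : MemLp X₁ 2 P) (hX₂ : MemLp X₂ 2 P)
    (hY₁ : MemLp Y₁ 2 P) (hY₂ : MemLp Y₂ 2 P) {a₁ a₂ b₁ b₂ h h' K : ℝ}
    (ha₁ : a₁ ∈ Icc 0 h) (ha₂ : a₂ ∈ Icc 0 h) (hb₁ : b₁ ∈ Icc 0 h') (hb₂ : b₂ ∈ Icc 0 h')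
    (h₁₁ : |∫ ω, X₁ ω * Y₁ ω ∂P| ≤ K) (h₁₂ : |∫ ω, X₁ ω * Y₂ ω ∂P| ≤ K)
    (h₂₁ : |∫ ω, X₂ ω * Y₁ ω ∂P| ≤ K) (h₂₂ : |∫ ω, X₂ ω * Y₂ ω ∂P| ≤ K) :
    |∫ ω, (a₁ * X₁ ω - a₂ * X₂ ω) * (b₁ * Y₁ ω - b₂ * Y₂ ω) ∂P| ≤ 4 * (h * h') * K := by
  have e : ∀ ω, (a₁ * X₁ ω - a₂ * X₂ ω) * (b₁ * Y₁ ω - b₂ * Y₂ ω) =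
      ((a₁ * b₁) * (X₁ ω * Y₁ ω) - (a₁ * b₂) * (X₁ ω * Y₂ ω)) -
        ((a₂ * b₁) * (X₂ ω * Y₁ ω) - (a₂ * b₂) * (X₂ ω * Y₂ ω)) := fun ω => by ring
  have i₁₁ : Integrable (fun ω => X₁ ω * Y₁ ω) P := hX₁.integrable_mul hY₁
  have i₁₂ : Integrable (fun ω => X₁ ω * Y₂ ω) P := hX₁.integrable_mul hY₂
  have i₂₁ : Integrable (fun ω => X₂ ω * Y₁ ω) P := hX₂.integrable_mul hY₁
  have i₂₂ : Integrable (fun ω => X₂ ω * Y₂ ω) P := hX₂.integrable_mul hY₂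
  simp_rw [e]
  rw [integral_sub_sub_sub (i₁₁.const_mul _) (i₁₂.const_mul _) (i₂₁.const_mul _)
    (i₂₂.const_mul _)]
  simp_rw [integral_const_mul]
  have key : ∀ {a b z : ℝ}, a ∈ Icc 0 h → b ∈ Icc 0 h' → |z| ≤ K → |(a * b) * z| ≤ h * h' * K := by
    intro a b z ha hb hz
    rw [abs_mul, abs_of_nonneg (mul_nonneg ha.1 hb.1)]
    have := ha.1.trans ha.2
    exact mul_le_mul (mul_le_mul ha.2 hb.2 hb.1 this) hz (abs_nonneg _)
      (mul_nonneg this (hb.1.trans hb.2))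
  have k₁₁ := abs_le.mp (key ha₁ hb₁ h₁₁)
  have k₁₂ := abs_le.mp (key ha₁ hb₂ h₁₂)
  have k₂₁ := abs_le.mp (key ha₂ hb₁ h₂₁)
  have k₂₂ := abs_le.mp (key ha₂ hb₂ h₂₂)
  rw [abs_le]
  constructor <;> linarith [k₁₁.1, k₁₁.2, k₁₂.1, k₁₂.2, k₂₁.1, k₂₁.2, k₂₂.1, k₂₂.2]

/-- Fubini for the product of two path integrals of `L²`-bounded processes. -/
lemma integral_mul_integral_bound [IsFiniteMeasure P] {μ ν : Measure ℝ} [IsFiniteMeasure μ]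
    [IsFiniteMeasure ν] {g g' : ℝ → Ω → ℝ}
    (hg : StronglyMeasurable (Function.uncurry g)) (hg' : StronglyMeasurable (Function.uncurry g'))
    {M M' K : ℝ} (hL : ∀ᵐ u ∂μ, MemLp (g u) 2 P ∧ ∫ ω, g u ω ^ 2 ∂P ≤ M)
    (hL' : ∀ᵐ v ∂ν, MemLp (g' v) 2 P ∧ ∫ ω, g' v ω ^ 2 ∂P ≤ M')
    (hK : ∀ᵐ u ∂μ, ∀ᵐ v ∂ν, |∫ ω, g u ω * g' v ω ∂P| ≤ K) :
    Integrable (fun ω => (∫ u, g u ω ∂μ) * (∫ v, g' v ω ∂ν)) P ∧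
      |∫ ω, (∫ u, g u ω ∂μ) * (∫ v, g' v ω ∂ν) ∂P| ≤ K * (μ.real univ * ν.real univ) := by
  -- The product of integrals is an integral over the product space, which then trades places
  -- with the expectation; `|xy| ≤ (x² + y²)/2` and the `L²` bounds give integrability.
  set F : Ω → ℝ × ℝ → ℝ := fun ω z => g z.1 ω * g' z.2 ω with hF
  have hFm : StronglyMeasurable (Function.uncurry F) := by
    have m1 : Measurable fun x : Ω × ℝ × ℝ => (x.2.1, x.1) := by fun_prop
    have m2 : Measurable fun x : Ω × ℝ × ℝ => (x.2.2, x.1) := by fun_prop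
    exact (hg.comp_measurable m1).mul (hg'.comp_measurable m2)
  have h1 : ∀ᵐ z ∂μ.prod ν, MemLp (g z.1) 2 P ∧ ∫ ω, g z.1 ω ^ 2 ∂P ≤ M :=
    Measure.quasiMeasurePreserving_fst.ae hL
  have h2 : ∀ᵐ z ∂μ.prod ν, MemLp (g' z.2) 2 P ∧ ∫ ω, g' z.2 ω ^ 2 ∂P ≤ M' :=
    Measure.quasiMeasurePreserving_snd.ae hL'
  have hFi : Integrable (Function.uncurry F) (P.prod (μ.prod ν)) := by
    rw [integrable_prod_iff' hFm.aestronglyMeasurable]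
    constructor
    · filter_upwards [h1, h2] with z hz hz'
      exact hz.1.integrable_mul hz'.1
    · refine Integrable.of_bound (C := (M + M') / 2) ?_ ?_
      · exact (hFm.norm.integral_prod_left').aestronglyMeasurable
      · filter_upwards [h1, h2] with z hz hz'
        rw [Real.norm_of_nonneg (integral_nonneg fun _ => norm_nonneg _)]
        calc ∫ ω, ‖Function.uncurry F (ω, z)‖ ∂P
            ≤ ∫ ω, (g z.1 ω ^ 2 + g' z.2 ω ^ 2) / 2 ∂P := by
              refine integral_mono (hz.1.integrable_mul hz'.1).norm
                ((hz.1.integrable_sq.add hz'.1.integrable_sq).div_const 2) fun ω => ?_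
              simp only [Function.uncurry, hF, Real.norm_eq_abs, abs_mul]
              nlinarith [sq_nonneg (|g z.1 ω| - |g' z.2 ω|), sq_abs (g z.1 ω), sq_abs (g' z.2 ω)]
          _ ≤ (M + M') / 2 := by
              rw [integral_div, integral_add hz.1.integrable_sq hz'.1.integrable_sq]
              linarith [hz.2, hz'.2]
  have e : (fun ω => (∫ u, g u ω ∂μ) * (∫ v, g' v ω ∂ν)) = fun ω => ∫ z, F ω z ∂μ.prod ν := by
    funext ω
    exact (integral_prod_mul (fun u => g u ω) (fun v => g' v ω)).symm
  rw [e]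
  refine ⟨hFi.integral_prod_left, ?_⟩
  rw [integral_integral_swap hFi, ← Real.norm_eq_abs]
  refine (norm_integral_le_of_norm_le_const (C := K) ?_).trans_eq ?_
  · have hm : Measurable fun z => ∫ ω, F ω z ∂P :=
      (hFm.integral_prod_left').measurable
    refine (Measure.ae_prod_iff_ae_ae ?_).mpr hK
    exact measurableSet_le hm.norm measurable_const
  · simp [Measure.real, ← univ_prod_univ, Measure.prod_prod]

end Prob

section Path

/-- A process with continuous paths on `[0,1]` agrees there with a jointly measurable process. -/
lemma exists_measurable_ext {Ω : Type*} {mΩ : MeasurableSpace Ω} {W : ℝ → Ω → ℝ}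
    (hm : ∀ t ∈ Icc (0 : ℝ) 1, Measurable (W t))
    (hc : ∀ ω, ContinuousOn (fun u => W u ω) (Icc 0 1)) :
    ∃ X : ℝ → Ω → ℝ, (∀ u ∈ Icc (0 : ℝ) 1, X u = W u) ∧ Measurable (Function.uncurry X) := by
  refine ⟨fun u => W (projIcc 0 1 zero_le_one u), fun u hu => ?_, ?_⟩
  · simp only [projIcc_of_mem zero_le_one hu]
  · refine measurable_uncurry_of_continuous_of_measurable (fun ω => ?_) fun u => hm _ (Subtype.prop _)
    exact (hc ω).comp_continuous (continuous_subtype_val.comp continuous_projIcc)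
      fun u => Subtype.prop _

/-- The unnormalised first factor of `Yproc`. -/
noncomputable def pathInt {Ω : Type*} (W : ℝ → Ω → ℝ) (s t : ℝ) (ω : Ω) : ℝ :=
  ∫ u in s..t, ((u - s) * (W t ω - W u ω) - (t - u) * (W u ω - W s ω))

lemma pathInt_eq {Ω : Type*} {W X : ℝ → Ω → ℝ} (hX : ∀ u ∈ Icc (0 : ℝ) 1, X u = W u) {s t : ℝ}
    (hs : 0 ≤ s) (hst : s ≤ t) (ht : t ≤ 1) (ω : Ω) :
    pathInt W s t ω =
      ∫ u in Ioc s t, ((u - s) * (X t ω - X u ω) - (t - u) * (X u ω - X s ω)) := by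
  rw [pathInt, intervalIntegral.integral_of_le hst]
  refine setIntegral_congr_fun measurableSet_Ioc fun u hu => ?_
  simp only [hX t ⟨hs.trans hst, ht⟩, hX s ⟨hs, hst.trans ht⟩,
    hX u ⟨hs.trans hu.1.le, hu.2.trans ht⟩]

lemma stronglyMeasurable_integrand {Ω : Type*} {mΩ : MeasurableSpace Ω} {X : ℝ → Ω → ℝ}
    (hX : Measurable (Function.uncurry X)) (s t : ℝ) :
    StronglyMeasurable (Function.uncurry fun u ω =>
      (u - s) * (X t ω - X u ω) - (t - u) * (X u ω - X s ω)) := by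
  have h1 : ∀ r, Measurable fun z : ℝ × Ω => X r z.2 := fun r =>
    hX.comp (measurable_const.prodMk measurable_snd)
  have h2 : Measurable fun z : ℝ × Ω => X z.1 z.2 := hX
  have h3 := h1 s
  have h4 := h1 t
  refine Measurable.stronglyMeasurable ?_
  unfold Function.uncurry
  fun_prop

lemma measurable_pathInt {Ω : Type*} {mΩ : MeasurableSpace Ω} {W : ℝ → Ω → ℝ}
    (hm : ∀ t ∈ Icc (0 : ℝ) 1, Measurable (W t))
    (hc : ∀ ω, ContinuousOn (fun u => W u ω) (Icc 0 1)) {s t : ℝ}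
    (hs : 0 ≤ s) (hst : s ≤ t) (ht : t ≤ 1) : Measurable (pathInt W s t) := by
  obtain ⟨X, hX, hXm⟩ := exists_measurable_ext hm hc
  have : pathInt W s t = fun ω =>
      ∫ u in Ioc s t, ((u - s) * (X t ω - X u ω) - (t - u) * (X u ω - X s ω)) :=
    funext (pathInt_eq hX hs hst ht)
  rw [this]
  exact ((stronglyMeasurable_integrand hXm s t).integral_prod_left).measurable

/-- The integrand is a combination of increments inside `[s,t]` with weights at most `t - s`, so
only the first interval's length enters through the power `2 * H`. -/
lemma pathInt_cov {Ω : Type*} [MeasurableSpace Ω] {P : Measure Ω} [IsFiniteMeasure P]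
    {H : ℝ} (h0 : 0 ≤ H) (h1 : H ≤ 1 / 2) {W : ℝ → Ω → ℝ} (hW : IsFBM P H W)
    (hc : ∀ ω, ContinuousOn (fun u => W u ω) (Icc 0 1)) {s t s' t' : ℝ}
    (hs : 0 ≤ s) (hst : s ≤ t) (ht : t ≤ 1) (hs' : 0 ≤ s') (hst' : s' ≤ t') (ht' : t' ≤ 1) :
    Integrable (fun ω => pathInt W s t ω * pathInt W s' t' ω) P ∧
      |∫ ω, pathInt W s t ω * pathInt W s' t' ω ∂P| ≤
        4 * (t - s) ^ (2 * H) * ((t - s) ^ 2 * (t' - s') ^ 2) := by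
  obtain ⟨X, hX, hXm⟩ := exists_measurable_ext hW.1 hc
  have hinc : ∀ {a b}, a ∈ Icc (0 : ℝ) 1 → b ∈ Icc (0 : ℝ) 1 →
      MemLp (fun ω => X b ω - X a ω) 2 P := by
    intro a b ha hb
    rw [hX a ha, hX b hb]
    exact (hW.memLp hb).sub (hW.memLp ha)
  have hbd : ∀ {a b c d r : ℝ}, a ∈ Icc (0 : ℝ) 1 → b ∈ Icc (0 : ℝ) 1 → c ∈ Icc (0 : ℝ) 1 →
      d ∈ Icc (0 : ℝ) 1 → a ≤ b → b - a ≤ r →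
      |∫ ω, (X b ω - X a ω) * (X d ω - X c ω) ∂P| ≤ r ^ (2 * H) := by
    intro a b c d r ha hb hc hd hab hr
    rw [hX a ha, hX b hb, hX c hc, hX d hd, hW.integral_inc ha hb hc hd]
    refine (abs_incCov_le h0 h1 _ _ _ _).trans ?_
    rw [abs_of_nonneg (by linarith)]
    exact Real.rpow_le_rpow (by linarith) hr (by linarith)
  have hcov : ∀ {s t s' t' u v : ℝ}, 0 ≤ s → t ≤ 1 → 0 ≤ s' → t' ≤ 1 → u ∈ Icc s t →
      v ∈ Icc s' t' →
      |∫ ω, ((u - s) * (X t ω - X u ω) - (t - u) * (X u ω - X s ω)) *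
        ((v - s') * (X t' ω - X v ω) - (t' - v) * (X v ω - X s' ω)) ∂P| ≤
        4 * ((t - s) * (t' - s')) * (t - s) ^ (2 * H) := by
    intro s t s' t' u v hs ht hs' ht' hu hv
    obtain ⟨hu1, hu2⟩ := hu
    obtain ⟨hv1, hv2⟩ := hv
    have ms : s ∈ Icc (0 : ℝ) 1 := ⟨by linarith, by linarith⟩
    have mt : t ∈ Icc (0 : ℝ) 1 := ⟨by linarith, by linarith⟩
    have mu : u ∈ Icc (0 : ℝ) 1 := ⟨by linarith, by linarith⟩
    have ms' : s' ∈ Icc (0 : ℝ) 1 := ⟨by linarith, by linarith⟩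
    have mt' : t' ∈ Icc (0 : ℝ) 1 := ⟨by linarith, by linarith⟩
    have mv : v ∈ Icc (0 : ℝ) 1 := ⟨by linarith, by linarith⟩
    exact abs_integral_comb_le (hinc mu mt) (hinc ms mu) (hinc mv mt') (hinc ms' mv)
      ⟨by linarith, by linarith⟩ ⟨by linarith, by linarith⟩
      ⟨by linarith, by linarith⟩ ⟨by linarith, by linarith⟩
      (hbd mu mt mv mt' hu2 (by linarith)) (hbd mu mt ms' mv hu2 (by linarith))
      (hbd ms mu mv mt' hu1 (by linarith)) (hbd ms mu ms' mv hu1 (by linarith))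
  have hL : ∀ {s t : ℝ}, 0 ≤ s → t ≤ 1 → ∀ᵐ u ∂(volume.restrict (Ioc s t)),
      MemLp (fun ω => (u - s) * (X t ω - X u ω) - (t - u) * (X u ω - X s ω)) 2 P ∧
      ∫ ω, ((u - s) * (X t ω - X u ω) - (t - u) * (X u ω - X s ω)) ^ 2 ∂P ≤
        4 * ((t - s) * (t - s)) * (t - s) ^ (2 * H) := by
    intro s t hs ht
    refine (ae_restrict_iff' measurableSet_Ioc).mpr (.of_forall fun u hu => ?_)
    have ms : s ∈ Icc (0 : ℝ) 1 := ⟨by linarith, by linarith [hu.1, hu.2]⟩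
    have mt : t ∈ Icc (0 : ℝ) 1 := ⟨by linarith [hu.1, hu.2], by linarith⟩
    have mu : u ∈ Icc (0 : ℝ) 1 := ⟨by linarith [hu.1], by linarith [hu.2]⟩
    refine ⟨((hinc mu mt).const_mul _).sub ((hinc ms mu).const_mul _), ?_⟩
    simp_rw [sq]
    exact (le_abs_self _).trans (hcov hs ht hs ht (Ioc_subset_Icc_self hu) (Ioc_subset_Icc_self hu))
  have key := integral_mul_integral_bound (P := P) (stronglyMeasurable_integrand hXm s t)
    (stronglyMeasurable_integrand hXm s' t') (hL hs ht) (hL hs' ht')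
    (K := 4 * ((t - s) * (t' - s')) * (t - s) ^ (2 * H)) (by
      refine (ae_restrict_iff' measurableSet_Ioc).mpr (.of_forall fun u hu => ?_)
      refine (ae_restrict_iff' measurableSet_Ioc).mpr (.of_forall fun v hv => ?_)
      exact hcov hs ht hs' ht' (Ioc_subset_Icc_self hu) (Ioc_subset_Icc_self hv))
  simp_rw [pathInt_eq hX hs hst ht, pathInt_eq hX hs' hst' ht']
  refine ⟨key.1, key.2.trans_eq ?_⟩
  simp only [measureReal_restrict_apply_univ, Real.volume_real_Ioc_of_le hst,
    Real.volume_real_Ioc_of_le hst']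
  ring

end Path

/-- Independence splits the covariance of two of the variables `Y` into a product; the first
factor is bounded by the size of the first interval alone. -/
lemma Yproc_mul_integral {Ω : Type*} [MeasurableSpace Ω] {P : Measure Ω} [IsFiniteMeasure P]
    {H : ℝ} (h0 : 0 ≤ H) (h1 : H ≤ 1 / 2) {W1 W2 : ℝ → Ω → ℝ}
    (hW1 : IsFBM P H W1) (hW2 : IsFBM P H W2)
    (hcont1 : ∀ ω, ContinuousOn (fun u => W1 u ω) (Icc 0 1))
    (hindep : Indep
      (⨆ t ∈ Icc (0 : ℝ) 1, MeasurableSpace.comap (W1 t) inferInstance)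
      (⨆ t ∈ Icc (0 : ℝ) 1, MeasurableSpace.comap (W2 t) inferInstance) P) {s t s' t' : ℝ}
    (hs : 0 ≤ s) (hst : s < t) (ht : t ≤ 1) (hs' : 0 ≤ s') (hst' : s' < t') (ht' : t' ≤ 1) :
    Integrable (fun ω => Yproc W1 W2 s t ω * Yproc W1 W2 s' t' ω) P ∧
      ∫ ω, Yproc W1 W2 s t ω * Yproc W1 W2 s' t' ω ∂P ≤
        4 * (t - s) ^ (2 * H) * |incCov H s t s' t'| := by
  set A : Ω → ℝ := fun ω => pathInt W1 s t ω * pathInt W1 s' t' ω with hA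
  set B : Ω → ℝ := fun ω => (W2 t ω - W2 s ω) * (W2 t' ω - W2 s' ω) with hB
  have e : (fun ω => Yproc W1 W2 s t ω * Yproc W1 W2 s' t' ω) =
      fun ω => (((t - s) ^ 2)⁻¹ * ((t' - s') ^ 2)⁻¹) * (A ω * B ω) := by
    funext ω
    simp only [Yproc, hA, hB, pathInt]
    ring
  have ms : s ∈ Icc (0 : ℝ) 1 := ⟨by linarith, by linarith⟩
  have mt : t ∈ Icc (0 : ℝ) 1 := ⟨by linarith, by linarith⟩
  have ms' : s' ∈ Icc (0 : ℝ) 1 := ⟨by linarith, by linarith⟩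
  have mt' : t' ∈ Icc (0 : ℝ) 1 := ⟨by linarith, by linarith⟩
  have meas : ∀ W : ℝ → Ω → ℝ, ∀ r ∈ Icc (0 : ℝ) 1,
      Measurable[⨆ t ∈ Icc (0 : ℝ) 1, MeasurableSpace.comap (W t) inferInstance] (W r) :=
    fun W r hr => (comap_measurable (W r)).mono
      (le_iSup₂ (f := fun t (_ : t ∈ Icc (0 : ℝ) 1) =>
        MeasurableSpace.comap (W t) inferInstance) r hr) le_rfl
  have hAm : Measurable[⨆ t ∈ Icc (0 : ℝ) 1, MeasurableSpace.comap (W1 t) inferInstance] A :=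
    (measurable_pathInt (meas W1) hcont1 hs hst.le ht).mul
      (measurable_pathInt (meas W1) hcont1 hs' hst'.le ht')
  have hBm : Measurable[⨆ t ∈ Icc (0 : ℝ) 1, MeasurableSpace.comap (W2 t) inferInstance] B :=
    ((meas W2 t mt).sub (meas W2 s ms)).mul ((meas W2 t' mt').sub (meas W2 s' ms'))
  have hAB : IndepFun A B P := (IndepFun_iff_Indep _ _ _).mpr
    (indep_of_indep_of_le_left (indep_of_indep_of_le_right hindep hBm.comap_le) hAm.comap_le)
  obtain ⟨hAi, hAb⟩ := pathInt_cov h0 h1 hW1 hcont1 hs hst.le ht hs' hst'.le ht'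
  have hBi : Integrable B P :=
    ((hW2.memLp mt).sub (hW2.memLp ms)).integrable_mul ((hW2.memLp mt').sub (hW2.memLp ms'))
  rw [e]
  refine ⟨(hAB.integrable_mul hAi hBi).const_mul _, ?_⟩
  rw [integral_const_mul, hAB.integral_fun_mul_eq_mul_integral hAi.aestronglyMeasurable
    hBi.aestronglyMeasurable, hW2.integral_inc ms mt ms' mt']
  have p1 : 0 < (t - s) ^ 2 := by have := sub_pos.mpr hst; positivity
  have p2 : 0 < (t' - s') ^ 2 := by have := sub_pos.mpr hst'; positivity
  calc _ ≤ (((t - s) ^ 2)⁻¹ * ((t' - s') ^ 2)⁻¹) * (|∫ ω, A ω ∂P| * |incCov H s t s' t'|) := by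
        refine mul_le_mul_of_nonneg_left ?_ (by positivity)
        rw [← abs_mul]
        exact le_abs_self _
    _ ≤ (((t - s) ^ 2)⁻¹ * ((t' - s') ^ 2)⁻¹) *
        (4 * (t - s) ^ (2 * H) * ((t - s) ^ 2 * (t' - s') ^ 2) * |incCov H s t s' t'|) := by
        gcongr
    _ = (((t - s) ^ 2)⁻¹ * (t - s) ^ 2) * (((t' - s') ^ 2)⁻¹ * (t' - s') ^ 2) *
        (4 * (t - s) ^ (2 * H) * |incCov H s t s' t'|) := by ring
    _ = _ := by rw [inv_mul_cancel₀ p1.ne', inv_mul_cancel₀ p2.ne', one_mul, one_mul]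

/-! ### The second moment of the sum -/

/-- For two independent fractional Brownian motions `W¹, W²` with Hurst parameter
`H ∈ (1/4,1/2)` and continuous sample paths, and `p' ∈ (1/H,4)`, there is a constant
`C = C(H,p')` such that for every subdivision `t_m < … < t_n` of `[0,1]` with mesh `|D|`:
`E(|Σ_{l=m}^{n−1} Y_{t_l,t_{l+1}}|²) ≤ C |D|^{4H−4/p'} (t_n−t_m)^{4/p'}`. -/
theorem Yproc_sum_second_moment_bound {Ω : Type*} [MeasurableSpace Ω]
    (P : Measure Ω) [IsProbabilityMeasure P]
    (H p' : ℝ) (hH : H ∈ Ioo (1 / 4 : ℝ) (1 / 2)) (hp' : p' ∈ Ioo (1 / H) 4)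
    (W1 W2 : ℝ → Ω → ℝ)
    (hW1 : IsFBM P H W1) (hW2 : IsFBM P H W2)
    (hcont1 : ∀ ω, ContinuousOn (fun u => W1 u ω) (Icc 0 1))
    (hcont2 : ∀ ω, ContinuousOn (fun u => W2 u ω) (Icc 0 1))
    (hindep : Indep
      (⨆ t ∈ Icc (0 : ℝ) 1, MeasurableSpace.comap (W1 t) inferInstance)
      (⨆ t ∈ Icc (0 : ℝ) 1, MeasurableSpace.comap (W2 t) inferInstance) P) :
    ∃ C : ℝ, ∀ (m n : ℕ) (hmn : m < n) (tt : ℕ → ℝ),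
      0 ≤ tt m → tt n ≤ 1 → (∀ k, m ≤ k → k < n → tt k < tt (k + 1)) →
      (∫ ω, (∑ l ∈ Finset.Ico m n, Yproc W1 W2 (tt l) (tt (l + 1)) ω) ^ 2 ∂P) ≤
        C * ((Finset.Ico m n).sup' (Finset.nonempty_Ico.mpr hmn)
              fun k => tt (k + 1) - tt k) ^ (4 * H - 4 / p') *
          (tt n - tt m) ^ (4 / p') := by
  obtain ⟨hH1, hH2⟩ := hH
  obtain ⟨hp1, hp2⟩ := hp'
  have hH0 : 0 < H := by linarith
  have hp0 : 0 < p' := (by positivity : 0 < 1 / H).trans hp1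
  have hq1 : 1 ≤ 4 / p' := by rw [le_div_iff₀ hp0]; linarith
  have hq : 4 / p' ≤ 4 * H := by
    rw [div_lt_iff₀ hH0] at hp1
    rw [div_le_iff₀ hp0]
    linarith
  refine ⟨12, fun m n hmn tt h0 h1 h => ?_⟩
  have lo : ∀ k ∈ Finset.Ico m n, 0 ≤ tt k := fun k hk =>
    h0.trans (le_of_step h le_rfl (Finset.mem_Ico.mp hk).1 (Finset.mem_Ico.mp hk).2.le)
  have hi : ∀ k ∈ Finset.Ico m n, tt (k + 1) ≤ 1 := fun k hk =>
    (le_of_step h (Nat.le_succ_of_le (Finset.mem_Ico.mp hk).1) (Finset.mem_Ico.mp hk).2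
      le_rfl).trans h1
  have st : ∀ k ∈ Finset.Ico m n, tt k < tt (k + 1) := fun k hk =>
    h k (Finset.mem_Ico.mp hk).1 (Finset.mem_Ico.mp hk).2
  have hY : ∀ k (_ : k ∈ Finset.Ico m n) l (_ : l ∈ Finset.Ico m n), _ := fun k hk l hl =>
    Yproc_mul_integral hH0.le hH2.le hW1 hW2 hcont1 hindep (lo k hk) (st k hk) (hi k hk)
      (lo l hl) (st l hl) (hi l hl)
  simp_rw [sq, Finset.sum_mul_sum]
  rw [integral_finsetSum _ fun k hk => integrable_finsetSum _ fun l hl => (hY k hk l hl).1]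
  calc ∑ k ∈ Finset.Ico m n, ∫ ω, ∑ l ∈ Finset.Ico m n,
        Yproc W1 W2 (tt k) (tt (k + 1)) ω * Yproc W1 W2 (tt l) (tt (l + 1)) ω ∂P
      ≤ ∑ k ∈ Finset.Ico m n, 12 * (tt (k + 1) - tt k) ^ (4 * H) := by
        refine Finset.sum_le_sum fun k hk => ?_
        have hpos : 0 < tt (k + 1) - tt k := sub_pos.mpr (st k hk)
        rw [integral_finsetSum _ fun l hl => (hY k hk l hl).1]
        refine (Finset.sum_le_sum fun l hl => (hY k hk l hl).2).trans ?_
        rw [← Finset.mul_sum]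
        refine (mul_le_mul_of_nonneg_left (sum_abs_incCov_le hH0.le hH2.le h hk)
          (by positivity)).trans_eq ?_
        rw [show 4 * H = 2 * H + 2 * H by ring, Real.rpow_add hpos]
        ring
    _ = 12 * ∑ k ∈ Finset.Ico m n, (tt (k + 1) - tt k) ^ (4 * H) := by rw [Finset.mul_sum]
    _ ≤ _ := by
        rw [mul_assoc]
        gcongr
        exact sum_rpow_step_le hq1 hq hmn h
end
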